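/- Let P be a partially ordered set with a greatest element ⊤ in which every element is the least upper bound of some set of very weakly ⊤-compact elements. Let M be the set of elements maximal below ⊤ and let N be the set of non-generators of P. Then for every g ∈ P, g is a greatest lower bound of M if and only if g is a least upper bound of N. -/

import Mathlib

def NonGenerator {P : Type*} [PartialOrder P] [OrderTop P] (a : P) : Prop :=
  ∀ e : P, (¬ ∃ p : P, p < ⊤ ∧ a ≤ p ∧ e ≤ p) → e = ⊤

def MaximalBelowTop {P : Type*} [PartialOrder P] [OrderTop P] (p : P) : Prop :=
  p < ⊤ ∧ ¬ ∃ q : P, p < q ∧ q < ⊤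

def UnboundedBelowTopChain {P : Type*} [PartialOrder P] [OrderTop P] (C : Set P) : Prop :=
  C.Nonempty ∧ IsChain (· ≤ ·) C ∧ (∀ c ∈ C, c < ⊤) ∧
    ¬ ∃ p : P, p < ⊤ ∧ ∀ c ∈ C, c ≤ p

def VeryWeaklyTopCompact {P : Type*} [PartialOrder P] [OrderTop P] (a : P) : Prop :=
  ∀ C : Set P, UnboundedBelowTopChain C →
    (∀ c ∈ C, ¬ ∃ p : P, MaximalBelowTop p ∧ c ≤ p) →
    ∃ c ∈ C, ∃ r : P, r < ⊤ ∧ c ≤ r ∧ a ≤ r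

/-!
A non-generator `a` lies below every coatom, and a very weakly ⊤-compact lower bound of the coatoms
is a non-generator: if `a ∨ e = ⊤` with `e ≠ ⊤`, then no coatom lies above `e`, so Zorn's lemma
yields an unbounded chain above `e`, and compactness of `a` along it contradicts `a ∨ e = ⊤`.
Hence the non-generators are join-dense in the lower bounds of the coatoms, so that both sets have
the same upper bounds; and a greatest lower bound is a least upper bound of the lower bounds.
-/

open Set

section

variable {P : Type*} [PartialOrder P] [OrderTop P] {a e p : P}

theorem maximalBelowTop_iff_isCoatom : MaximalBelowTop p ↔ IsCoatom p := by
  simp only [MaximalBelowTop, IsCoatom, lt_top_iff_ne_top, not_exists, not_and, not_not]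

theorem NonGenerator.le_of_maximalBelowTop (ha : NonGenerator a) (hp : MaximalBelowTop p) :
    a ≤ p := by
  by_contra hap
  have join_eq_top : ¬∃ q, q < ⊤ ∧ a ≤ q ∧ p ≤ q := by
    rintro ⟨q, hq, haq, hpq⟩
    have hqp : q = p := ((maximalBelowTop_iff_isCoatom.1 hp).le_iff_eq hq.ne).1 hpq
    exact hap (hqp ▸ haq)
  exact hp.1.ne (ha p join_eq_top)

theorem isCoatom_of_maximal_mem_Ico_top (hp : Maximal (· ∈ Ico e ⊤) p) : IsCoatom p := by
  refine ⟨hp.prop.2.ne, fun q hpq => ?_⟩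
  by_contra hq
  exact hp.not_gt ⟨hp.prop.1.trans hpq.le, lt_top_iff_ne_top.2 hq⟩ hpq

theorem exists_unboundedBelowTopChain_subset_Ico (he : e ≠ ⊤)
    (hmax : ∀ p, MaximalBelowTop p → ¬e ≤ p) : ∃ C ⊆ Ico e ⊤, UnboundedBelowTopChain C := by
  by_contra hno
  have chain_bounded : ∀ C ⊆ Ico e ⊤, IsChain (· ≤ ·) C → ∀ y ∈ C,
      ∃ ub ∈ Ico e ⊤, ∀ z ∈ C, z ≤ ub := by
    intro C hC hchain y hy
    by_contra hub
    refine hno ⟨C, hC, ⟨y, hy⟩, hchain, fun c hc => (hC hc).2, ?_⟩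
    rintro ⟨p, hp, hCp⟩
    exact hub ⟨p, ⟨(hC hy).1.trans (hCp y hy), hp⟩, hCp⟩
  obtain ⟨m, hem, hm⟩ :=
    zorn_le_nonempty₀ _ chain_bounded e (left_mem_Ico.2 (lt_top_iff_ne_top.2 he))
  exact hmax m (maximalBelowTop_iff_isCoatom.2 (isCoatom_of_maximal_mem_Ico_top hm)) hem

theorem VeryWeaklyTopCompact.nonGenerator (ha : VeryWeaklyTopCompact a)
    (hle : a ∈ lowerBounds {p : P | MaximalBelowTop p}) : NonGenerator a := by
  intro e join_eq_top
  by_contra he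
  have hmax : ∀ p, MaximalBelowTop p → ¬e ≤ p := fun p hp hep =>
    join_eq_top ⟨p, hp.1, hle hp, hep⟩
  obtain ⟨C, hC, hunbdd⟩ := exists_unboundedBelowTopChain_subset_Ico he hmax
  have hCmax : ∀ c ∈ C, ¬∃ p, MaximalBelowTop p ∧ c ≤ p := by
    rintro c hc ⟨p, hp, hcp⟩
    exact hmax p hp ((hC hc).1.trans hcp)
  obtain ⟨c, hc, r, hr, hcr, har⟩ := ha C hunbdd hCmax
  exact join_eq_top ⟨r, hr, har, (hC hc).1.trans hcr⟩

theorem upperBounds_lowerBounds_maximalBelowTop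
    (halg : ∀ x ∈ lowerBounds {p : P | MaximalBelowTop p},
      ∃ A : Set P, (∀ a ∈ A, VeryWeaklyTopCompact a) ∧ IsLUB A x) :
    upperBounds (lowerBounds {p : P | MaximalBelowTop p}) =
      upperBounds {x : P | NonGenerator x} := by
  apply Subset.antisymm
  · exact upperBounds_mono_set fun a ha p hp => ha.le_of_maximalBelowTop hp
  · intro u hu x hx
    obtain ⟨A, hA, hAx⟩ := halg x hx
    have nonGenerator_of_mem : ∀ a ∈ A, NonGenerator a := fun a ha =>
      (hA a ha).nonGenerator fun p hp => (hAx.1 ha).trans (hx hp)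
    exact hAx.2 fun a ha => hu (nonGenerator_of_mem a ha)

theorem stmt_13_general
    (halg : ∀ x ∈ lowerBounds {p : P | MaximalBelowTop p},
      ∃ A : Set P, (∀ a ∈ A, VeryWeaklyTopCompact a) ∧ IsLUB A x)
    (g : P) :
    IsGLB {p : P | MaximalBelowTop p} g ↔ IsLUB {x : P | NonGenerator x} g :=
  isLUB_lowerBounds.symm.trans (isLUB_congr (upperBounds_lowerBounds_maximalBelowTop halg))

end

theorem stmt_13 {P : Type*} [PartialOrder P] [OrderTop P]
    (halg : ∀ x : P, ∃ A : Set P, (∀ a ∈ A, VeryWeaklyTopCompact a) ∧ IsLUB A x)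
    (g : P) :
    IsGLB {p : P | MaximalBelowTop p} g ↔ IsLUB {x : P | NonGenerator x} g :=
  stmt_13_general (fun x _ => halg x) g
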